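/- arXiv:1504.05501 — 14 statements merged into one kernel-verified Lean document; each statement's English description precedes it below -/
import Mathlib

section
/- Let 0<b<1 and let η:[b,1]→ℝ be a continuously differentiable function, not identically zero, with η(b)=η(1)=0. Then there exists δ_η<1 such that for every δ with δ_η<δ≤1, the second variation E₂(η,δ,b) := 2π ∫_b^1 [ (η'(r))² − δ (η(r)/r + η'(r))² ] r dr is strictly negative. -/
/-! Write `A = ∫ (η')² r` and `B = ∫ (η/r + η')² r`, so that the second variation is `2π (A - δ B)`.
Expanding the square gives `B = A + ∫ η²/r + ∫ (η²)'`; the last integral vanishes because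
`η b = η 1 = 0`, and `∫ η²/r > 0` because `η` is continuous and not identically zero.
Hence `0 ≤ A < B`, and `δη = A / B` works. -/

open Real Set

/-- For `0 < b < 1` and a continuously differentiable `η : [b,1] → ℝ`,
not identically zero, with `η b = η 1 = 0`, there exists `δ_η < 1` such that for every
`δ` with `δ_η < δ ≤ 1` the second variation
`E₂(η,δ,b) = 2π ∫_b^1 [(η')² − δ (η/r + η')²] r dr` is strictly negative. -/
theorem stmt_0 (b : ℝ) (hb0 : 0 < b) (hb1 : b < 1)
    (η η' : ℝ → ℝ)
    (hderiv : ∀ r ∈ Icc b 1, HasDerivAt η (η' r) r)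
    (hcont : ContinuousOn η' (Icc b 1))
    (hηb : η b = 0) (hη1 : η 1 = 0)
    (hne : ∃ r ∈ Icc b 1, η r ≠ 0) :
    ∃ δη : ℝ, δη < 1 ∧ ∀ δ : ℝ, δη < δ → δ ≤ 1 →
      2 * π * ∫ r in b..1, ((η' r) ^ 2 - δ * (η r / r + η' r) ^ 2) * r < 0 := by
  have hηc : ContinuousOn η (Icc b 1) := fun r hr => (hderiv r hr).continuousAt.continuousWithinAt
  have hr0 : ∀ r ∈ Icc b 1, r ≠ 0 := fun r hr => (hb0.trans_le hr.1).ne'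
  have huI : uIcc b 1 = Icc b 1 := uIcc_of_le hb1.le
  have cA : ContinuousOn (fun r => (η' r) ^ 2 * r) (Icc b 1) := by fun_prop
  have cB : ContinuousOn (fun r => (η r / r + η' r) ^ 2 * r) (Icc b 1) := by
    fun_prop (disch := assumption)
  have cC : ContinuousOn (fun r => (η r) ^ 2 / r) (Icc b 1) := by
    fun_prop (disch := assumption)
  have cD : ContinuousOn (fun r => 2 * η r * η' r) (Icc b 1) := by fun_prop
  have iA := (huI ▸ cA).intervalIntegrable (μ := MeasureTheory.volume)
  have iB := (huI ▸ cB).intervalIntegrable (μ := MeasureTheory.volume)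
  have iC := (huI ▸ cC).intervalIntegrable (μ := MeasureTheory.volume)
  have iD := (huI ▸ cD).intervalIntegrable (μ := MeasureTheory.volume)
  have hD : ∫ r in b..1, 2 * η r * η' r = 0 := by
    rw [intervalIntegral.integral_eq_sub_of_hasDerivAt (f := η ^ 2) _ iD]
    · simp [hηb, hη1]
    · intro r hr
      simpa using (hderiv r (huI ▸ hr)).pow 2
  have hC : 0 < ∫ r in b..1, (η r) ^ 2 / r := by
    refine intervalIntegral.integral_pos hb1 cC
      (fun r hr => div_nonneg (sq_nonneg _) (hb0.trans hr.1).le) ?_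
    obtain ⟨r, hr, h⟩ := hne
    have := hb0.trans_le hr.1
    exact ⟨r, hr, by positivity⟩
  have hA : 0 ≤ ∫ r in b..1, (η' r) ^ 2 * r :=
    intervalIntegral.integral_nonneg hb1.le
      (fun r hr => mul_nonneg (sq_nonneg _) (hb0.trans_le hr.1).le)
  have hB : ∫ r in b..1, (η r / r + η' r) ^ 2 * r =
      (∫ r in b..1, (η' r) ^ 2 * r) + (∫ r in b..1, (η r) ^ 2 / r) +
        ∫ r in b..1, 2 * η r * η' r := by
    rw [← intervalIntegral.integral_add iA iC, ← intervalIntegral.integral_add (iA.add iC) iD]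
    refine intervalIntegral.integral_congr fun r hr => ?_
    have := hr0 r (huI ▸ hr)
    field_simp
    ring
  have hBpos : 0 < ∫ r in b..1, (η r / r + η' r) ^ 2 * r := by linarith
  refine ⟨(∫ r in b..1, (η' r) ^ 2 * r) / ∫ r in b..1, (η r / r + η' r) ^ 2 * r,
    (div_lt_one hBpos).2 (by linarith), fun δ hδ _ => ?_⟩
  have hE : ∫ r in b..1, ((η' r) ^ 2 - δ * (η r / r + η' r) ^ 2) * r =
      (∫ r in b..1, (η' r) ^ 2 * r) - δ * ∫ r in b..1, (η r / r + η' r) ^ 2 * r := by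
    rw [← intervalIntegral.integral_const_mul,
      ← intervalIntegral.integral_sub iA (iB.const_mul δ)]
    refine intervalIntegral.integral_congr fun r _ => ?_
    ring
  rw [hE]
  rw [div_lt_iff₀ hBpos] at hδ
  exact mul_neg_of_pos_of_neg (by positivity) (by linarith)
end

section
/- Let 0<b<1 and δ ∈ ℝ, and set η(r) = sin(π · log r / log b). Then ∫_b^1 [ (η'(r))² − δ (η(r)/r + η'(r))² ] r dr = ( π² − δ(π² + (log b)²) ) / ( 2 log(1/b) ). In particular this quantity is strictly negative if and only if δ > π²/(π² + (log b)²). -/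
open Real Set

/-!
With `L = log b`, `k = π / L` and `s = k log r`, one has `η' = k cos s / r`, so the integrand is
`(k² cos² s - δ (sin s + k cos s)²) / r`. This has an elementary antiderivative in `log r`; as
`sin s` vanishes at both ends `r = b` (`s = π`) and `r = 1` (`s = 0`), only its part linear in
`log r` contributes, which gives the value. The sign criterion follows since `log (1 / b) > 0`.
-/

/-- The antiderivative, in the variable `r`, of the reduced integrand. -/
lemma hasDerivAt_antideriv (k δ r : ℝ) (hk : k ≠ 0) (hr : 0 < r) :
    HasDerivAt (fun r => (k ^ 2 * (1 - δ) - δ) / 2 * Real.log r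
        + (k ^ 2 * (1 - δ) + δ) / (2 * k) * (sin (k * Real.log r) * cos (k * Real.log r))
        - δ * sin (k * Real.log r) ^ 2)
      (((k * cos (k * Real.log r)) ^ 2
        - δ * (sin (k * Real.log r) + k * cos (k * Real.log r)) ^ 2) / r) r := by
  have hl := Real.hasDerivAt_log hr.ne'
  have hs := (hl.const_mul k).sin
  have hc := (hl.const_mul k).cos
  refine (((hl.const_mul ((k ^ 2 * (1 - δ) - δ) / 2)).add
    ((hs.mul hc).const_mul ((k ^ 2 * (1 - δ) + δ) / (2 * k)))).sub
    ((hs.pow 2).const_mul δ)).congr_deriv ?_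
  have h1 := sin_sq_add_cos_sq (k * Real.log r)
  generalize sin (k * Real.log r) = S at *
  generalize cos (k * Real.log r) = C at *
  field_simp
  norm_num
  linear_combination -(k ^ 2 * (1 - δ) - δ) * h1

lemma integral_value (b : ℝ) (hb0 : 0 < b) (hb1 : b < 1) (δ : ℝ)
    (η : ℝ → ℝ) (hη : η = fun r => Real.sin (π * Real.log r / Real.log b)) :
    (∫ r in b..1, ((deriv η r) ^ 2 - δ * (η r / r + deriv η r) ^ 2) * r)
      = (π ^ 2 - δ * (π ^ 2 + (Real.log b) ^ 2)) / (2 * Real.log (1 / b)) := by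
  have hL : Real.log b < 0 := Real.log_neg hb0 hb1
  obtain ⟨k, hk⟩ : ∃ k, k = π / Real.log b := ⟨_, rfl⟩
  have hk0 : k ≠ 0 := by rw [hk]; exact div_ne_zero pi_ne_zero hL.ne
  have hη' : η = fun r => sin (k * Real.log r) := by
    rw [hη, hk]; funext r; congr 1; ring
  have hpos : ∀ r ∈ uIcc b 1, 0 < r := fun r hr => by
    rw [uIcc_of_le hb1.le] at hr; exact hb0.trans_le hr.1
  have hcongr : ∀ r ∈ uIcc b 1, ((deriv η r) ^ 2 - δ * (η r / r + deriv η r) ^ 2) * r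
      = ((k * cos (k * Real.log r)) ^ 2
        - δ * (sin (k * Real.log r) + k * cos (k * Real.log r)) ^ 2) / r := by
    intro r hr
    have hr0 := hpos r hr
    have hd : deriv η r = cos (k * Real.log r) * (k * r⁻¹) := by
      rw [hη']; exact ((Real.hasDerivAt_log hr0.ne').const_mul k).sin.deriv
    rw [hd, hη']
    field_simp
  rw [intervalIntegral.integral_congr hcongr,
    intervalIntegral.integral_eq_sub_of_hasDerivAt
      (fun r hr => hasDerivAt_antideriv k δ r hk0 (hpos r hr))]
  · have hkb : k * Real.log b = π := by rw [hk]; field_simp [hL.ne]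
    rw [hkb, one_div, Real.log_inv]
    simp only [Real.log_one, mul_zero, sin_zero, sin_pi]
    have := hL.ne
    field_simp
    rw [← hkb]
    ring
  · apply ContinuousOn.intervalIntegrable
    have h0 : ∀ r ∈ uIcc b 1, r ≠ 0 := fun r hr => (hpos r hr).ne'
    have hl : ContinuousOn Real.log (uIcc b 1) := continuousOn_log.mono h0
    fun_prop (disch := assumption)

/-- For `0 < b < 1`, `δ ∈ ℝ` and `η r = sin(π log r / log b)`, one has
`∫_b^1 [(η')² − δ(η/r + η')²] r dr = (π² − δ(π² + (log b)²))/(2 log(1/b))`,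
which is strictly negative iff `δ > π²/(π² + (log b)²)`. -/
theorem stmt_4 (b : ℝ) (hb0 : 0 < b) (hb1 : b < 1) (δ : ℝ)
    (η : ℝ → ℝ) (hη : η = fun r => Real.sin (π * Real.log r / Real.log b)) :
    (∫ r in b..1, ((deriv η r) ^ 2 - δ * (η r / r + deriv η r) ^ 2) * r)
      = (π ^ 2 - δ * (π ^ 2 + (Real.log b) ^ 2)) / (2 * Real.log (1 / b)) ∧
    ((∫ r in b..1, ((deriv η r) ^ 2 - δ * (η r / r + deriv η r) ^ 2) * r) < 0
      ↔ δ > π ^ 2 / (π ^ 2 + (Real.log b) ^ 2)) := by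
  have h := integral_value b hb0 hb1 δ η hη
  refine ⟨h, ?_⟩
  have hL : 0 < 2 * Real.log (1 / b) := by
    rw [one_div, Real.log_inv]; linarith [Real.log_neg hb0 hb1]
  have hD : 0 < π ^ 2 + (Real.log b) ^ 2 := by positivity
  rw [h, div_lt_iff₀ hL, zero_mul, sub_neg, gt_iff_lt, div_lt_iff₀ hD]
end

section
/- Let 0<b<1 and let A, δ₁, δ₂ be real numbers. Define R(r) = [((log b)² + π²) A (δ₁A² − 2δ₂) / (2 r² (log b)²)] · sin(π log r/log b) − [δ₁ A³ (3π² + (log b)²) / (6 r² (log b)²)] · sin(3π log r/log b). Then ∫_b^1 sin(π log r/log b) · R(r) · r dr = ((log b)² + π²) · A(δ₁A² − 2δ₂) / (4 log(1/b)). In particular, this integral vanishes if and only if A(A²δ₁ − 2δ₂) = 0. -/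
open Real Set

/-!
With `u = π log r / log b`, the measure `r dr` cancels the `1 / r²` in `R` up to `dr / r`, which is
`(log b / π) du`, so the integral reduces to `∫ (c sin² u - d sin u sin 3u) du` over `[0, π]`.
Here `sin u sin 3u` has the antiderivative `sin³ u cos u`, which vanishes at both ends, and `sin² u`
has the antiderivative `(u - sin u cos u) / 2`, which contributes `π / 2`. The equivalence follows
because `(log b)² + π²` and `log (1 / b)` are nonzero.
-/

/-- An antiderivative of the integrand in the variable `u = π log r / L`, for generic
coefficients `c` and `d` of the two harmonics. -/
lemma hasDerivAt_primitive (L c d r : ℝ) (hL : L ≠ 0) (hr : r ≠ 0) :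
    HasDerivAt (fun r : ℝ => L / π *
        (c * ((π * Real.log r / L
          - Real.sin (π * Real.log r / L) * Real.cos (π * Real.log r / L)) / 2)
        - d * (Real.sin (π * Real.log r / L) ^ 3 * Real.cos (π * Real.log r / L))))
      ((c * Real.sin (π * Real.log r / L) ^ 2
        - d * (Real.sin (π * Real.log r / L) * Real.sin (3 * π * Real.log r / L))) / r) r := by
  have hu : HasDerivAt (fun r : ℝ => π * Real.log r / L) (π * r⁻¹ / L) r :=
    ((Real.hasDerivAt_log hr).const_mul π).div_const L
  have hs := hu.sin
  have hc := hu.cos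
  have h := ((((hu.sub (hs.mul hc)).div_const 2).const_mul c).sub
    (((hs.pow 3).mul hc).const_mul d)).const_mul (L / π)
  refine h.congr_deriv ?_
  simp only [Pi.pow_apply]
  have h3 : 3 * π * Real.log r / L = 3 * (π * Real.log r / L) := by ring
  rw [h3, Real.sin_three_mul]
  have hcs := Real.cos_sq' (π * Real.log r / L)
  generalize π * Real.log r / L = u at *
  have hπ := Real.pi_ne_zero
  field_simp
  push_cast
  ring_nf
  simp only [hcs]
  ring

/-- For `0 < b < 1` and reals `A, δ₁, δ₂`, with
`R r = [((log b)² + π²) A (δ₁A² − 2δ₂)/(2 r² (log b)²)] sin(π log r/log b)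
      − [δ₁ A³ (3π² + (log b)²)/(6 r² (log b)²)] sin(3π log r/log b)`,
one has `∫_b^1 sin(π log r/log b) R(r) r dr = ((log b)² + π²) A(δ₁A² − 2δ₂)/(4 log(1/b))`,
which vanishes iff `A(A²δ₁ − 2δ₂) = 0`. -/
theorem stmt_5 (b : ℝ) (hb0 : 0 < b) (hb1 : b < 1) (A δ₁ δ₂ : ℝ)
    (R : ℝ → ℝ)
    (hR : R = fun r =>
      ((Real.log b) ^ 2 + π ^ 2) * A * (δ₁ * A ^ 2 - 2 * δ₂) /
          (2 * r ^ 2 * (Real.log b) ^ 2) * Real.sin (π * Real.log r / Real.log b)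
        - δ₁ * A ^ 3 * (3 * π ^ 2 + (Real.log b) ^ 2) /
          (6 * r ^ 2 * (Real.log b) ^ 2) * Real.sin (3 * π * Real.log r / Real.log b)) :
    (∫ r in b..1, Real.sin (π * Real.log r / Real.log b) * R r * r)
      = ((Real.log b) ^ 2 + π ^ 2) * (A * (δ₁ * A ^ 2 - 2 * δ₂)) / (4 * Real.log (1 / b)) ∧
    ((∫ r in b..1, Real.sin (π * Real.log r / Real.log b) * R r * r) = 0
      ↔ A * (A ^ 2 * δ₁ - 2 * δ₂) = 0) := by
  have hL : Real.log b < 0 := Real.log_neg hb0 hb1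
  have hL0 : Real.log b ≠ 0 := hL.ne
  have hπ := Real.pi_ne_zero
  have key : (∫ r in b..1, Real.sin (π * Real.log r / Real.log b) * R r * r)
      = ((Real.log b) ^ 2 + π ^ 2) * (A * (δ₁ * A ^ 2 - 2 * δ₂)) / (4 * Real.log (1 / b)) := by
    have hpos : ∀ r ∈ uIcc b 1, r ≠ 0 := by
      intro r hr
      rw [uIcc_of_le hb1.le] at hr
      exact (hb0.trans_le hr.1).ne'
    set c := ((Real.log b) ^ 2 + π ^ 2) * A * (δ₁ * A ^ 2 - 2 * δ₂) / (2 * (Real.log b) ^ 2)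
      with hc
    set d := δ₁ * A ^ 3 * (3 * π ^ 2 + (Real.log b) ^ 2) / (6 * (Real.log b) ^ 2) with hd
    have hcongr : (∫ r in b..1, Real.sin (π * Real.log r / Real.log b) * R r * r)
        = ∫ r in b..1, (c * Real.sin (π * Real.log r / Real.log b) ^ 2
          - d * (Real.sin (π * Real.log r / Real.log b)
            * Real.sin (3 * π * Real.log r / Real.log b))) / r := by
      refine intervalIntegral.integral_congr fun r hr => ?_
      have hr0 := hpos r hr
      simp only [hR, hc, hd]
      generalize Real.sin (π * Real.log r / Real.log b) = s
      generalize Real.sin (3 * π * Real.log r / Real.log b) = t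
      field_simp
    have hlog : ContinuousOn Real.log (uIcc b 1) :=
      Real.continuousOn_log.mono fun r hr => hpos r hr
    have hint : IntervalIntegrable (fun r => (c * Real.sin (π * Real.log r / Real.log b) ^ 2
          - d * (Real.sin (π * Real.log r / Real.log b)
            * Real.sin (3 * π * Real.log r / Real.log b))) / r) MeasureTheory.volume b 1 := by
      refine ContinuousOn.intervalIntegrable (ContinuousOn.div ?_ continuousOn_id hpos)
      fun_prop
    rw [hcongr, intervalIntegral.integral_eq_sub_of_hasDerivAt
      (fun r hr => hasDerivAt_primitive (Real.log b) c d r hL0 (hpos r hr)) hint]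
    -- The endpoints `r = 1` and `r = b` correspond to `u = 0` and `u = π`.
    have hub : π * Real.log b / Real.log b = π := by field_simp
    rw [hub]
    simp only [Real.log_one, mul_zero, zero_div, Real.sin_zero, Real.sin_pi, one_div, Real.log_inv]
    rw [hc]
    field_simp
    ring
  refine ⟨key, ?_⟩
  have hpos : (Real.log b) ^ 2 + π ^ 2 ≠ 0 := by positivity
  have hden : 4 * Real.log (1 / b) ≠ 0 := by
    rw [one_div, Real.log_inv]
    simpa using hL0
  rw [key, div_eq_zero_iff, or_iff_left hden, mul_eq_zero, or_iff_right hpos, mul_comm δ₁]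
end

section
/- Let 0<b<1 and define g(t) = (b e^t + e^{−t})/(1+b). Then 0 < g(t) < 1 for all t ∈ (0, log(1/b)), the function U(t) = arccos(g(t)) is twice continuously differentiable on the open interval (0, log(1/b)) and satisfies (cos²U(t) − 1) U''(t) − (1/2) sin(2U(t)) ( (U'(t))² + 1 ) = 0 there, and U extends continuously to [0, log(1/b)] with U(0) = U(log(1/b)) = 0. -/
open Real Set

/-!
Since `g < 1` amounts to `(e^t - 1)(b e^t - 1) < 0`, it holds strictly between the two zeros
`t = 0` and `t = log (1/b)`, where `g = 1`; hence `arccos` is smooth along `g` on the open interval.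
The equation comes from `g'' = g`: differentiating `cos U = g` twice gives
`sin U * U'' = -cos U * (U'^2 + 1)`, and multiplying by `-sin U` yields the claim.
-/

/-- For `0 < b < 1` and `g t = (b e^t + e^{−t})/(1+b)`:
`0 < g < 1` on `(0, log(1/b))`; `U = arccos ∘ g` is C² on `(0, log(1/b))` and satisfies
`(cos²U − 1) U'' − (1/2) sin(2U)((U')² + 1) = 0` there; and `U` is continuous on
`[0, log(1/b)]` with `U 0 = U (log(1/b)) = 0`. -/
theorem stmt_7 (b : ℝ) (hb0 : 0 < b) (hb1 : b < 1)
    (g U : ℝ → ℝ)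
    (hg : g = fun t => (b * Real.exp t + Real.exp (-t)) / (1 + b))
    (hU : U = fun t => Real.arccos (g t)) :
    (∀ t ∈ Ioo 0 (Real.log (1 / b)), 0 < g t ∧ g t < 1) ∧
    ContDiffOn ℝ 2 U (Ioo 0 (Real.log (1 / b))) ∧
    (∀ t ∈ Ioo 0 (Real.log (1 / b)),
      ((Real.cos (U t)) ^ 2 - 1) * deriv (deriv U) t
        - (1 / 2) * Real.sin (2 * U t) * ((deriv U t) ^ 2 + 1) = 0) ∧
    ContinuousOn U (Icc 0 (Real.log (1 / b))) ∧
    U 0 = 0 ∧ U (Real.log (1 / b)) = 0 := by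
  have h1b : 0 < 1 + b := by linarith
  have hbL : b * exp (log (1 / b)) = 1 := by
    rw [exp_log (by positivity)]; field_simp
  have hgt : ∀ t, g t = (b * exp t + exp (-t)) / (1 + b) := fun t => by rw [hg]
  have hUt : ∀ t, U t = arccos (g t) := fun t => by rw [hU]
  have hpos : ∀ t, 0 < g t := fun t => by rw [hgt]; positivity
  have hlt : ∀ t ∈ Ioo 0 (log (1 / b)), g t < 1 := by
    intro t ht
    have hx : 1 < exp t := one_lt_exp_iff.2 ht.1
    have hbx : b * exp t < 1 := by
      rw [← hbL]
      exact mul_lt_mul_of_pos_left (exp_lt_exp.2 ht.2) hb0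
    have hinv : exp t * exp (-t) = 1 := by rw [← exp_add]; simp
    rw [hgt, div_lt_one h1b]
    -- After multiplication by `exp t` this is `(exp t - 1) * (1 - b * exp t) > 0`.
    refine lt_of_mul_lt_mul_left ?_ (exp_pos t).le
    nlinarith [mul_pos (sub_pos.2 hx) (sub_pos.2 hbx)]
  have hgC : ContDiff ℝ 2 g := by rw [hg]; fun_prop
  have hUC : ContDiffOn ℝ 2 U (Ioo 0 (log (1 / b))) := by
    intro t ht
    have h := (contDiffAt_arccos (n := 2) (by linarith [hpos t] : g t ≠ -1)
      (hlt t ht).ne).comp t hgC.contDiffAt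
    rw [hU]
    exact h.contDiffWithinAt
  refine ⟨fun t ht => ⟨hpos t, hlt t ht⟩, hUC, ?_, ?_, ?_, ?_⟩
  · have hcos : ∀ t ∈ Ioo 0 (log (1 / b)), cos (U t) = g t := fun t ht => by
      rw [hUt, cos_arccos (by linarith [hpos t]) (hlt t ht).le]
    have hUd : ∀ t ∈ Ioo 0 (log (1 / b)), HasDerivAt U (deriv U t) t := fun t ht =>
      ((hUC.contDiffAt (isOpen_Ioo.mem_nhds ht)).differentiableAt (by norm_num)).hasDerivAt
    have hVd : ∀ t ∈ Ioo 0 (log (1 / b)), HasDerivAt (deriv U) (deriv (deriv U) t) t :=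
      fun t ht => (((hUC.deriv_of_isOpen (m := 1) isOpen_Ioo (by norm_num)).contDiffAt
        (isOpen_Ioo.mem_nhds ht)).differentiableAt (by norm_num)).hasDerivAt
    have hE : ∀ t, HasDerivAt (fun s => exp (-s)) (-exp (-t)) t := fun t => by
      simpa using (hasDerivAt_neg t).exp
    have hg1 : ∀ t, HasDerivAt g ((b * exp t - exp (-t)) / (1 + b)) t := fun t => by
      rw [hg]
      exact (((Real.hasDerivAt_exp t).const_mul b).add (hE t)).div_const (1 + b)
    have hg2 : ∀ t, HasDerivAt (fun s => (b * exp s - exp (-s)) / (1 + b)) (g t) t := fun t => by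
      have h := (((Real.hasDerivAt_exp t).const_mul b).sub (hE t)).div_const (1 + b)
      rw [sub_neg_eq_add, ← hgt] at h
      exact h
    have hfirst : ∀ t ∈ Ioo 0 (log (1 / b)),
        (b * exp t - exp (-t)) / (1 + b) = -sin (U t) * deriv U t := fun t ht =>
      (hg1 t).unique ((hUd t ht).cos.congr_of_eventuallyEq
        (Filter.eventuallyEq_of_mem (isOpen_Ioo.mem_nhds ht) fun s hs => (hcos s hs).symm))
    intro t ht
    have hsecond := (hg2 t).unique (((hUd t ht).sin.neg.mul (hVd t ht)).congr_of_eventuallyEq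
        (Filter.eventuallyEq_of_mem (isOpen_Ioo.mem_nhds ht) fun s hs => hfirst s hs))
    simp only [Pi.neg_apply] at hsecond
    rw [← hcos t ht] at hsecond
    rw [sin_two_mul]
    linear_combination (-sin (U t)) * hsecond + deriv (deriv U) t * sin_sq_add_cos_sq (U t)
  · rw [hU]
    exact (continuous_arccos.comp hgC.continuous).continuousOn
  · rw [hUt, hgt]
    simp [add_comm b 1, div_self h1b.ne']
  · have hb : exp (-log (1 / b)) = b := by
      rw [one_div, log_inv, neg_neg, exp_log hb0]
    rw [hUt, hgt, hbL, hb, div_self h1b.ne', arccos_one]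
end

section
/- Let 0<b<1 and define g(t) = (b e^t + e^{−t})/(1+b). Then π ∫_0^{log(1/b)} ( g(t) − g'(t) )² dt = 2π (1 − b)/(1 + b). -/
/-!
Since `e^t` equals its own derivative and `e^{-t}` is minus its derivative, `g - g'` equals
`2 e^{-t} / (1 + b)`. Its square `4 e^{-2t} / (1 + b)²` has the primitive `-2 e^{-2t} / (1 + b)²`,
and `e^{-t} = b` at the upper endpoint `t = log (1/b)`, so the integral is
`2 (1 - b²) / (1 + b)² = 2 (1 - b) / (1 + b)`.
-/

open Real Set

/-- For `0 < b < 1` and `g t = (b e^t + e^{−t})/(1+b)`,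
`π ∫_0^{log(1/b)} (g − g')² dt = 2π(1−b)/(1+b)`. -/
theorem stmt_8 (b : ℝ) (hb0 : 0 < b) (hb1 : b < 1)
    (g : ℝ → ℝ) (hg : g = fun t => (b * Real.exp t + Real.exp (-t)) / (1 + b)) :
    π * ∫ t in (0:ℝ)..Real.log (1 / b), (g t - deriv g t) ^ 2
      = 2 * π * (1 - b) / (1 + b) := by
  have hb : (1 + b) ≠ 0 := by positivity
  have hexp : ∀ t : ℝ, HasDerivAt (fun s => Real.exp (-s)) (-Real.exp (-t)) t := fun t => by
    simpa using (hasDerivAt_neg t).exp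
  have hderiv : ∀ t, deriv g t = (b * Real.exp t - Real.exp (-t)) / (1 + b) := fun t => by
    rw [hg, sub_eq_add_neg]
    exact ((((Real.hasDerivAt_exp t).const_mul b).add (hexp t)).div_const (1 + b)).deriv
  -- The growing mode `e^t` cancels in `g - g'`, which leaves `2 e^{-t} / (1 + b)`.
  have hint : ∀ t, (g t - deriv g t) ^ 2 = 4 * Real.exp (-t) ^ 2 / (1 + b) ^ 2 := fun t => by
    rw [hderiv, hg]
    field_simp
    ring
  have hprim : ∀ t : ℝ, HasDerivAt (fun s => -2 * Real.exp (-s) ^ 2 / (1 + b) ^ 2)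
      (4 * Real.exp (-t) ^ 2 / (1 + b) ^ 2) t := fun t => by
    refine ((((hexp t).pow 2).const_mul (-2)).div_const ((1 + b) ^ 2)).congr_deriv ?_
    norm_num
    ring
  have hlog : Real.exp (-Real.log (1 / b)) = b := by
    rw [one_div, Real.log_inv, neg_neg, Real.exp_log hb0]
  simp_rw [hint]
  rw [intervalIntegral.integral_eq_sub_of_hasDerivAt (fun t _ => hprim t)
    ((by fun_prop : Continuous fun t : ℝ =>
      4 * Real.exp (-t) ^ 2 / (1 + b) ^ 2).intervalIntegrable _ _), hlog]
  simp only [neg_zero, Real.exp_zero]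
  field_simp
  ring
end

section
/- Let 0<b<1. For every t ∈ (0, log(1/b)) one has b² e^{2t} + e^{−2t} − b² − 1 < 0 and (2b − b² − 1)/(b² e^{2t} + e^{−2t} − b² − 1) ≥ 1. -/
open Real Set

/-!
With `x = e^t` and `y = e^{-t}`, so that `x * y = 1`, the denominator equals
`(x² - 1)(b² - y²)`, which is negative because `x > 1` and `y > b` for `0 < t < log (1/b)`.
It exceeds the numerator by `(b x - y)² ≥ 0`, so the quotient, whose denominator is negative,
is at least `1`.
-/

/-- For `0 < b < 1` and every `t ∈ (0, log(1/b))`,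
`b² e^{2t} + e^{−2t} − b² − 1 < 0` and
`(2b − b² − 1)/(b² e^{2t} + e^{−2t} − b² − 1) ≥ 1`. -/
theorem stmt_9 (b : ℝ) (hb0 : 0 < b) (hb1 : b < 1) :
    ∀ t ∈ Ioo 0 (Real.log (1 / b)),
      b ^ 2 * Real.exp (2 * t) + Real.exp (-(2 * t)) - b ^ 2 - 1 < 0 ∧
      1 ≤ (2 * b - b ^ 2 - 1) /
        (b ^ 2 * Real.exp (2 * t) + Real.exp (-(2 * t)) - b ^ 2 - 1) := by
  rintro t ⟨ht0, ht1⟩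
  have hx2 : Real.exp (2 * t) = Real.exp t ^ 2 := by
    rw [← Real.exp_nat_mul]; norm_num
  have hy2 : Real.exp (-(2 * t)) = Real.exp (-t) ^ 2 := by
    rw [← Real.exp_nat_mul]; congr 1; push_cast; ring
  have hxy : Real.exp t * Real.exp (-t) = 1 := by
    rw [← Real.exp_add]; simp
  have hx : 1 < Real.exp t := Real.one_lt_exp_iff.mpr ht0
  have hy : b < Real.exp (-t) := by
    rw [one_div, Real.log_inv] at ht1
    exact (Real.log_lt_iff_lt_exp hb0).mp (by linarith)
  rw [hx2, hy2]
  generalize Real.exp t = x at *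
  generalize Real.exp (-t) = y at *
  -- Since `x * y = 1`, the denominator factors with one positive and one negative factor.
  have hfac : b ^ 2 * x ^ 2 + y ^ 2 - b ^ 2 - 1 = (x ^ 2 - 1) * (b ^ 2 - y ^ 2) := by
    linear_combination (x * y + 1) * hxy
  have hneg : b ^ 2 * x ^ 2 + y ^ 2 - b ^ 2 - 1 < 0 := by
    rw [hfac]
    exact mul_neg_of_pos_of_neg (by nlinarith) (by nlinarith)
  refine ⟨hneg, (one_le_div_of_neg hneg).mpr ?_⟩
  -- The denominator minus the numerator is the square `(b * x - y) ^ 2`.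
  have hsq : b ^ 2 * x ^ 2 + y ^ 2 - b ^ 2 - 1 - (2 * b - b ^ 2 - 1) = (b * x - y) ^ 2 := by
    linear_combination 2 * b * hxy
  linarith [sq_nonneg (b * x - y)]
end

section
/- Let 0<b<1, 0<δ<1, α>0 with α ≠ δ, and set μ = √(δ/(1−δ)). Define f(r) = sin(μ log(1/r)) + (√(δ(1−δ))/(α−δ)) cos(μ log(1/r)) for r ∈ [b,1]. Then: (i) r f'(r) + r² f''(r) + (δ/(1−δ)) f(r) = 0 on [b,1]; (ii) f'(1) = ((δ−α)/(1−δ)) f(1); and (iii) the boundary condition f'(b) = ((α + δ/b)/(1−δ)) f(b) holds if and only if (αδ − αbδ + α²b − δ) sin(μ log(1/b)) + α(1+b)√(δ(1−δ)) cos(μ log(1/b)) = 0. -/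
open Real Set

/-!
In the variable `t = log (1 / r)` the Euler operator `r f' + r² f''` becomes `d²/dt²`, so
`f = sin (μ t) + c cos (μ t)` satisfies `r f' + r² f'' = -μ² f` with `μ² = δ / (1 - δ)`.
For the boundary conditions put `s = √(δ (1 - δ))`, so that `μ = s / (1 - δ)`, `c = s / (α - δ)`
and `s² = δ (1 - δ)`. The condition at `1` is then immediate, and at `b` the defect of the Robin
condition, multiplied by the nonzero number `b (1 - δ) (α - δ)`, is minus the left-hand side of
the compatibility equation.
-/

lemma hasDerivAt_mul_log_one_div (m : ℝ) {r : ℝ} (hr : 0 < r) :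
    HasDerivAt (fun x : ℝ => m * Real.log (1 / x)) (-(m / r)) r := by
  have h := ((Real.hasDerivAt_log hr.ne').neg).const_mul m
  have e : (fun x : ℝ => m * Real.log (1 / x)) = fun x => m * (-Real.log) x := by
    funext x
    simp [Real.log_inv]
  rw [e]
  exact h.congr_deriv (by field_simp)

lemma hasDerivAt_sin_add_cos_log (m c : ℝ) {r : ℝ} (hr : 0 < r) :
    HasDerivAt (fun x : ℝ => Real.sin (m * Real.log (1 / x)) + c * Real.cos (m * Real.log (1 / x)))
      (-(m / r) * (Real.cos (m * Real.log (1 / r)) - c * Real.sin (m * Real.log (1 / r)))) r := by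
  have h := hasDerivAt_mul_log_one_div m hr
  exact (h.sin.add (h.cos.const_mul c)).congr_deriv (by ring)

lemma hasDerivAt_deriv_sin_add_cos_log (m c : ℝ) {r : ℝ} (hr : 0 < r) :
    HasDerivAt
      (fun x : ℝ => -(m / x) *
        (Real.cos (m * Real.log (1 / x)) - c * Real.sin (m * Real.log (1 / x))))
      (m / r ^ 2 * (Real.cos (m * Real.log (1 / r)) - c * Real.sin (m * Real.log (1 / r)))
        - m ^ 2 / r ^ 2 *
          (Real.sin (m * Real.log (1 / r)) + c * Real.cos (m * Real.log (1 / r)))) r := by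
  have h := hasDerivAt_mul_log_one_div m hr
  have h1 : HasDerivAt (fun x : ℝ => -(m / x)) (m / r ^ 2) r := by
    have h2 := ((hasDerivAt_inv hr.ne').const_mul m).neg
    exact h2.congr_deriv (by field_simp)
  refine (h1.mul (h.cos.sub (h.sin.const_mul c))).congr_deriv ?_
  simp only [Pi.sub_apply]
  field_simp
  ring

/-- For `0 < b < 1`, `0 < δ < 1`, `α > 0` with `α ≠ δ`,
`μ = √(δ/(1−δ))` and
`f r = sin(μ log(1/r)) + (√(δ(1−δ))/(α−δ)) cos(μ log(1/r))` on `[b,1]`: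
(i) `r f' + r² f'' + (δ/(1−δ)) f = 0` on `[b,1]`;
(ii) `f'(1) = ((δ−α)/(1−δ)) f(1)`;
(iii) `f'(b) = ((α + δ/b)/(1−δ)) f(b)` holds iff
`(αδ − αbδ + α²b − δ) sin(μ log(1/b)) + α(1+b)√(δ(1−δ)) cos(μ log(1/b)) = 0`. -/
theorem stmt_11 (b δ α : ℝ) (hb0 : 0 < b) (hb1 : b < 1)
    (hδ0 : 0 < δ) (hδ1 : δ < 1) (hα : 0 < α) (hαδ : α ≠ δ)
    (μ : ℝ) (hμ : μ = Real.sqrt (δ / (1 - δ)))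
    (f : ℝ → ℝ)
    (hf : f = fun r => Real.sin (μ * Real.log (1 / r))
      + Real.sqrt (δ * (1 - δ)) / (α - δ) * Real.cos (μ * Real.log (1 / r))) :
    (∀ r ∈ Icc b 1,
      r * deriv f r + r ^ 2 * deriv (deriv f) r + (δ / (1 - δ)) * f r = 0) ∧
    deriv f 1 = ((δ - α) / (1 - δ)) * f 1 ∧
    (deriv f b = ((α + δ / b) / (1 - δ)) * f b ↔
      (α * δ - α * b * δ + α ^ 2 * b - δ) * Real.sin (μ * Real.log (1 / b))
        + α * (1 + b) * Real.sqrt (δ * (1 - δ)) * Real.cos (μ * Real.log (1 / b)) = 0) := by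
  have h1δ : 0 < 1 - δ := by linarith
  have hαδ' : α - δ ≠ 0 := sub_ne_zero.mpr hαδ
  have hμ2 : μ ^ 2 = δ / (1 - δ) := by rw [hμ, Real.sq_sqrt (by positivity)]
  have hs2 : Real.sqrt (δ * (1 - δ)) ^ 2 = δ * (1 - δ) := Real.sq_sqrt (by positivity)
  have hμs : μ = Real.sqrt (δ * (1 - δ)) / (1 - δ) := by
    rw [hμ, Real.sqrt_eq_iff_mul_self_eq (by positivity) (by positivity), ← sq, div_pow, hs2]
    field_simp
  set s := Real.sqrt (δ * (1 - δ)) with hs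
  have hd : ∀ r : ℝ, 0 < r → deriv f r = -(μ / r) *
      (Real.cos (μ * Real.log (1 / r)) - s / (α - δ) * Real.sin (μ * Real.log (1 / r))) := by
    intro r hr
    rw [hf]
    exact (hasDerivAt_sin_add_cos_log μ _ hr).deriv
  refine ⟨fun r hr => ?_, ?_, ?_⟩
  · have hr0 : 0 < r := lt_of_lt_of_le hb0 hr.1
    -- The formula for `f'` holds on a neighbourhood of `r`, so it can be differentiated.
    have hdd := ((hasDerivAt_deriv_sin_add_cos_log μ (s / (α - δ)) hr0).congr_of_eventuallyEq
      ((lt_mem_nhds hr0).mono hd)).deriv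
    rw [hdd, hd r hr0, hf, ← hμ2]
    generalize s / (α - δ) = c
    field_simp
    ring
  · rw [hd 1 one_pos, hf, hμs]
    simp
    field_simp
    ring
  · rw [hd b hb0, hf, hμs]
    beta_reduce
    generalize Real.sin _ = S
    generalize Real.cos _ = C
    have key : (-(s / (1 - δ) / b) * (C - s / (α - δ) * S)
        - (α + δ / b) / (1 - δ) * (S + s / (α - δ) * C)) * (b * (1 - δ) * (α - δ))
        = -((α * δ - α * b * δ + α ^ 2 * b - δ) * S + α * (1 + b) * s * C) := by
      field_simp
      linear_combination S * hs2
    have hne : b * (1 - δ) * (α - δ) ≠ 0 := by positivity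
    rw [← sub_eq_zero, ← mul_eq_zero_iff_right hne, key, neg_eq_zero]
end

section
/- Let 0<b<1 and α>0, and define δ₁₁ = (αb² + α²b + α + 1 − b²α² − b) / (2(αb − b + 1)). Then αb − b + 1 > 0, δ₁₁ > 1/2, and δ₁₁ < 1 if and only if α < 1. Consequently δ₁₁ ∈ (0,1) if and only if 0 < α < 1. -/
open Real Set

/-!
Write `δ₁₁ = N / (2 D)` with `D = α b - b + 1 = α b + (1 - b) > 0`. The bounds are sign
conditions on two factorizations: `N - D = α (1 - b + b² + α b (1 - b)) > 0` gives `δ₁₁ > 1/2`,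
and `2 D - N = (1 - α) (1 - b) (1 + α b)` has the sign of `1 - α`.
-/

/-- For `0 < b < 1`, `α > 0` and
`δ₁₁ = (αb² + α²b + α + 1 − b²α² − b)/(2(αb − b + 1))`:
`αb − b + 1 > 0`, `δ₁₁ > 1/2`, `δ₁₁ < 1 ↔ α < 1`; consequently
`δ₁₁ ∈ (0,1) ↔ 0 < α < 1`. -/
theorem stmt_12 (b α : ℝ) (hb0 : 0 < b) (hb1 : b < 1) (hα : 0 < α)
    (δ₁₁ : ℝ)
    (hδ : δ₁₁ = (α * b ^ 2 + α ^ 2 * b + α + 1 - b ^ 2 * α ^ 2 - b) /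
      (2 * (α * b - b + 1))) :
    0 < α * b - b + 1 ∧ 1 / 2 < δ₁₁ ∧ (δ₁₁ < 1 ↔ α < 1) ∧
    (δ₁₁ ∈ Ioo (0:ℝ) 1 ↔ (0 < α ∧ α < 1)) := by
  have hD : 0 < α * b - b + 1 := by nlinarith [mul_pos hα hb0]
  -- `N - D = α (1 - b + b² + α b (1 - b))`
  have hhalf : 1 / 2 < δ₁₁ := by
    rw [hδ, lt_div_iff₀ (by positivity)]
    have hb : 0 < 1 - b := by linarith
    have h : 0 < α * ((1 - b) + b ^ 2 + α * b * (1 - b)) := by positivity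
    linarith
  -- `2 D - N = (1 - α) (1 - b) (1 + α b)`, and the last two factors are positive
  have hone : δ₁₁ < 1 ↔ α < 1 := by
    have hc : 0 < (1 - b) * (1 + α * b) := mul_pos (by linarith) (by positivity)
    have h : (0 < (1 - α) * ((1 - b) * (1 + α * b))) ↔ 0 < 1 - α :=
      mul_pos_iff_of_pos_right hc
    rw [hδ, div_lt_one (by positivity), ← sub_pos, ← sub_pos (a := 1) (b := α), ← h]
    ring_nf
  refine ⟨hD, hhalf, hone, ?_⟩
  rw [mem_Ioo, hone]
  exact and_congr_left fun _ => ⟨fun _ => hα, fun _ => by linarith⟩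
end

section
/- Let k ≥ 2 be an integer, 0<b<1, 0<δ<1, and α>0, and suppose D := δα + α²b − αbδ − δ + k²(1−δ) ≠ 0. If tanh( √((k²−δ)/(1−δ)) · log(1/b) ) + ( (1−δ) α (1+b) / D ) · √((k²−δ)/(1−δ)) = 0, then α < 1 and δ > (k² + α²b)/(αb − α + 1 + k²). -/
/-!
Write `D` for the denominator and `E = αb − α + 1 + k²`. Since `log (1 / b) > 0`, the `tanh` term
is positive, so the compatibility condition forces `D < 0`. As `D = (k² + α²b) − δE`, this gives
`E > 0` and the bound on `δ`; combined with `δ < 1` it gives `k² + α²b < E`, that is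
`(α − 1)(αb + 1) < 0`, hence `α < 1`.
-/

open Real Set

/-- Let `k ≥ 2` be an integer, `0 < b < 1`, `0 < δ < 1`, `α > 0`, and
suppose `D := δα + α²b − αbδ − δ + k²(1−δ) ≠ 0`. If
`tanh(√((k²−δ)/(1−δ)) log(1/b)) + ((1−δ)α(1+b)/D) √((k²−δ)/(1−δ)) = 0`,
then `α < 1` and `δ > (k² + α²b)/(αb − α + 1 + k²)`. -/
theorem stmt_13 (k : ℕ) (hk : 2 ≤ k) (b δ α : ℝ)
    (hb0 : 0 < b) (hb1 : b < 1) (hδ0 : 0 < δ) (hδ1 : δ < 1) (hα : 0 < α)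
    (hD : δ * α + α ^ 2 * b - α * b * δ - δ + (k : ℝ) ^ 2 * (1 - δ) ≠ 0)
    (hcompat : Real.tanh (Real.sqrt (((k : ℝ) ^ 2 - δ) / (1 - δ)) * Real.log (1 / b))
      + ((1 - δ) * α * (1 + b) /
          (δ * α + α ^ 2 * b - α * b * δ - δ + (k : ℝ) ^ 2 * (1 - δ)))
        * Real.sqrt (((k : ℝ) ^ 2 - δ) / (1 - δ)) = 0) :
    α < 1 ∧ ((k : ℝ) ^ 2 + α ^ 2 * b) / (α * b - α + 1 + (k : ℝ) ^ 2) < δ := by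
  -- If `D > 0`, the left side of the compatibility condition is a sum of positive terms.
  have hDneg : δ * α + α ^ 2 * b - α * b * δ - δ + (k : ℝ) ^ 2 * (1 - δ) < 0 := by
    rcases lt_or_gt_of_ne hD with h | h
    · exact h
    · exfalso
      have hk' : (2 : ℝ) ≤ k := by exact_mod_cast hk
      have h1 : 0 < 1 - δ := by linarith
      have h2 : 0 < (k : ℝ) ^ 2 - δ := by nlinarith
      have hs : 0 < Real.sqrt (((k : ℝ) ^ 2 - δ) / (1 - δ)) :=
        Real.sqrt_pos.mpr (div_pos h2 h1)
      have hl : 0 < Real.log (1 / b) := Real.log_pos ((one_lt_div hb0).mpr hb1)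
      have ht : 0 < Real.tanh (Real.sqrt (((k : ℝ) ^ 2 - δ) / (1 - δ)) * Real.log (1 / b)) := by
        rw [Real.tanh_eq_sinh_div_cosh]
        exact div_pos (Real.sinh_pos_iff.mpr (mul_pos hs hl)) (Real.cosh_pos _)
      have h3 : 0 < ((1 - δ) * α * (1 + b) /
          (δ * α + α ^ 2 * b - α * b * δ - δ + (k : ℝ) ^ 2 * (1 - δ)))
          * Real.sqrt (((k : ℝ) ^ 2 - δ) / (1 - δ)) :=
        mul_pos (div_pos (by positivity) h) hs
      linarith
  -- `D = (k² + α²b) - δE`, so `D < 0` forces `E > 0`.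
  have hlt : (k : ℝ) ^ 2 + α ^ 2 * b < δ * (α * b - α + 1 + (k : ℝ) ^ 2) := by linarith
  have hnum : 0 < (k : ℝ) ^ 2 + α ^ 2 * b := by positivity
  have hE : 0 < α * b - α + 1 + (k : ℝ) ^ 2 :=
    pos_of_mul_pos_right (hnum.trans hlt) hδ0.le
  refine ⟨?_, (div_lt_iff₀ hE).mpr hlt⟩
  -- Since `δ < 1`, `k² + α²b < E`, which rearranges to `(α - 1)(αb + 1) < 0`.
  have hprod : (α - 1) * (α * b + 1) < 0 := by nlinarith
  have hab : 0 < α * b + 1 := by positivity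
  by_contra hge
  have : 0 ≤ (α - 1) * (α * b + 1) := mul_nonneg (by linarith) hab.le
  linarith
end

section
/- Let 0<b₀<1, c₀ ≥ 0, let s:[b₀,1]→ℝ be measurable, and for each integer n ≥ 0 define, for continuously differentiable a,p,c,d:[b₀,1]→ℝ, L_n[a,p,c,d] = ∫_{b₀}^1 { [ (a')² + (p')² + (c')² + (d')² + ((n²+4)/r²)(a² + p² + c² + d²) + (8n/r²)(a d − p c) ] r + c₀ (a² + p² + c² + d²)(2s² − 1) r + 4 c₀ s² (a² + p²) r } dr. Then for every integer n ≥ 1, L_{n+2}[a,p,c,d] − L_n[a,p,c,d] = ∫_{b₀}^1 [ (4n+4)(a² + p² + c² + d²) + 16(a d − p c) ] (1/r) dr ≥ 0. -/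
open Real Set MeasureTheory

/-!
For `n` fixed, the integrands of `L (n + 2)` and `L n` differ only in the terms carrying `n`, and
`(n + 2)² - n² = 4n + 4`, `8 (n + 2) - 8 n = 16`, which gives the identity once both integrands are
known to be integrable: each is a continuous function plus `s²` times a continuous function.
For the sign, `n ≥ 1` makes the quadratic form
`(4n + 4)(a² + p² + c² + d²) + 16 (a d - p c)` at least `8 ((a + d)² + (p - c)²)`.
-/

/-- With `0 < b₀ < 1`, `c₀ ≥ 0`, `s : [b₀,1] → ℝ` measurable (with `s²`
integrable so all the integrals are defined), and continuously differentiable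
`a, p, c, d : [b₀,1] → ℝ`, the mode functionals
`L_n[a,p,c,d] = ∫_{b₀}^1 {[(a')² + (p')² + (c')² + (d')²
  + ((n²+4)/r²)(a²+p²+c²+d²) + (8n/r²)(ad − pc)] r
  + c₀ (a²+p²+c²+d²)(2s²−1) r + 4c₀ s² (a²+p²) r} dr`
satisfy, for every `n ≥ 1`,
`L_{n+2} − L_n = ∫_{b₀}^1 [(4n+4)(a²+p²+c²+d²) + 16(ad − pc)] (1/r) dr ≥ 0`. -/
theorem stmt_14 (b₀ c₀ : ℝ) (hb0 : 0 < b₀) (hb1 : b₀ < 1) (hc₀ : 0 ≤ c₀)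
    (s : ℝ → ℝ) (hs : Measurable s)
    (hs2 : IntervalIntegrable (fun r => (s r) ^ 2) volume b₀ 1)
    (a p c d a' p' c' d' : ℝ → ℝ)
    (hda : ∀ r ∈ Icc b₀ 1, HasDerivAt a (a' r) r)
    (hdp : ∀ r ∈ Icc b₀ 1, HasDerivAt p (p' r) r)
    (hdc : ∀ r ∈ Icc b₀ 1, HasDerivAt c (c' r) r)
    (hdd : ∀ r ∈ Icc b₀ 1, HasDerivAt d (d' r) r)
    (ha'c : ContinuousOn a' (Icc b₀ 1)) (hp'c : ContinuousOn p' (Icc b₀ 1))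
    (hc'c : ContinuousOn c' (Icc b₀ 1)) (hd'c : ContinuousOn d' (Icc b₀ 1))
    (L : ℕ → ℝ)
    (hL : ∀ n : ℕ, L n = ∫ r in b₀..1,
      (((a' r) ^ 2 + (p' r) ^ 2 + (c' r) ^ 2 + (d' r) ^ 2
          + (((n : ℝ) ^ 2 + 4) / r ^ 2) *
              ((a r) ^ 2 + (p r) ^ 2 + (c r) ^ 2 + (d r) ^ 2)
          + (8 * (n : ℝ) / r ^ 2) * (a r * d r - p r * c r)) * r
        + c₀ * ((a r) ^ 2 + (p r) ^ 2 + (c r) ^ 2 + (d r) ^ 2)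
            * (2 * (s r) ^ 2 - 1) * r
        + 4 * c₀ * (s r) ^ 2 * ((a r) ^ 2 + (p r) ^ 2) * r)) :
    ∀ n : ℕ, 1 ≤ n →
      L (n + 2) - L n
        = (∫ r in b₀..1,
            ((4 * (n : ℝ) + 4) * ((a r) ^ 2 + (p r) ^ 2 + (c r) ^ 2 + (d r) ^ 2)
              + 16 * (a r * d r - p r * c r)) * (1 / r)) ∧
      0 ≤ L (n + 2) - L n := by
  intro n hn
  have hle : b₀ ≤ 1 := hb1.le
  have hac : ContinuousOn a (Icc b₀ 1) := fun r hr => (hda r hr).continuousAt.continuousWithinAt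
  have hpc : ContinuousOn p (Icc b₀ 1) := fun r hr => (hdp r hr).continuousAt.continuousWithinAt
  have hcc : ContinuousOn c (Icc b₀ 1) := fun r hr => (hdc r hr).continuousAt.continuousWithinAt
  have hdc' : ContinuousOn d (Icc b₀ 1) := fun r hr => (hdd r hr).continuousAt.continuousWithinAt
  have hr0 : ∀ r ∈ Icc b₀ 1, r ^ 2 ≠ 0 := fun r hr => pow_ne_zero 2 (hb0.trans_le hr.1).ne'
  have hint : ∀ m : ℕ, IntervalIntegrable (fun r =>
      (((a' r) ^ 2 + (p' r) ^ 2 + (c' r) ^ 2 + (d' r) ^ 2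
          + (((m : ℝ) ^ 2 + 4) / r ^ 2) *
              ((a r) ^ 2 + (p r) ^ 2 + (c r) ^ 2 + (d r) ^ 2)
          + (8 * (m : ℝ) / r ^ 2) * (a r * d r - p r * c r)) * r
        + c₀ * ((a r) ^ 2 + (p r) ^ 2 + (c r) ^ 2 + (d r) ^ 2)
            * (2 * (s r) ^ 2 - 1) * r
        + 4 * c₀ * (s r) ^ 2 * ((a r) ^ 2 + (p r) ^ 2) * r)) volume b₀ 1 := by
    intro m
    -- The integrand is `G + s² H` with `G`, `H` continuous; only `s²` is merely integrable.
    have hG : ContinuousOn (fun r =>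
        ((a' r) ^ 2 + (p' r) ^ 2 + (c' r) ^ 2 + (d' r) ^ 2
          + (((m : ℝ) ^ 2 + 4) / r ^ 2) *
              ((a r) ^ 2 + (p r) ^ 2 + (c r) ^ 2 + (d r) ^ 2)
          + (8 * (m : ℝ) / r ^ 2) * (a r * d r - p r * c r)) * r
        - c₀ * ((a r) ^ 2 + (p r) ^ 2 + (c r) ^ 2 + (d r) ^ 2) * r) (uIcc b₀ 1) := by
      rw [uIcc_of_le hle]
      have h1 : ContinuousOn (fun r : ℝ => ((m : ℝ) ^ 2 + 4) / r ^ 2) (Icc b₀ 1) :=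
        continuousOn_const.div (by fun_prop) hr0
      have h2 : ContinuousOn (fun r : ℝ => 8 * (m : ℝ) / r ^ 2) (Icc b₀ 1) :=
        continuousOn_const.div (by fun_prop) hr0
      fun_prop
    have hH : ContinuousOn (fun r =>
        2 * c₀ * ((a r) ^ 2 + (p r) ^ 2 + (c r) ^ 2 + (d r) ^ 2) * r
        + 4 * c₀ * ((a r) ^ 2 + (p r) ^ 2) * r) (uIcc b₀ 1) := by
      rw [uIcc_of_le hle]
      fun_prop
    refine (hG.intervalIntegrable.add (hs2.mul_continuousOn hH)).congr ?_
    intro r _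
    simp only [Pi.add_apply]
    ring
  have key : L (n + 2) - L n
        = (∫ r in b₀..1,
            ((4 * (n : ℝ) + 4) * ((a r) ^ 2 + (p r) ^ 2 + (c r) ^ 2 + (d r) ^ 2)
              + 16 * (a r * d r - p r * c r)) * (1 / r)) := by
    rw [hL, hL, ← intervalIntegral.integral_sub (hint _) (hint _)]
    apply intervalIntegral.integral_congr
    intro r hr
    rw [uIcc_of_le hle] at hr
    have hr' : r ≠ 0 := (hb0.trans_le hr.1).ne'
    push_cast
    field_simp
    ring
  refine ⟨key, ?_⟩
  rw [key]
  apply intervalIntegral.integral_nonneg hle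
  intro r hr
  have hrpos : 0 < r := hb0.trans_le hr.1
  have hn1 : (1 : ℝ) ≤ n := by exact_mod_cast hn
  refine mul_nonneg ?_ (by positivity)
  -- The form equals `8 ((a + d)² + (p - c)²) + (4 n - 4) (a² + p² + c² + d²)`.
  have hS : 0 ≤ ((n : ℝ) - 1) * ((a r) ^ 2 + (p r) ^ 2 + (c r) ^ 2 + (d r) ^ 2) :=
    mul_nonneg (by linarith) (by positivity)
  nlinarith [sq_nonneg (a r + d r), sq_nonneg (p r - c r)]
end

section
/- Let 0<b₀<1 and c ∈ ℝ. Suppose s:[b₀,1]→ℝ is twice continuously differentiable, strictly positive, and satisfies s''(r) + s'(r)/r − 4 s(r)/r² = c · s(r)(2 s(r)² − 1) on [b₀,1]. Let a:[b₀,1]→ℝ be continuously differentiable with a(b₀)=a(1)=0, and set a₀(r) = s(r) a(r). Then ∫_{b₀}^1 [ (a₀'(r))² r + 4 a₀(r)²/r + c (2 s(r)² − 1) a₀(r)² r ] dr = ∫_{b₀}^1 s(r)² (a'(r))² r dr. In particular, if a is not identically zero, the left-hand side is strictly positive. -/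
/-!
Hardy's trick. Multiplying the equation for `s` by `s a² r` eliminates the zeroth-order terms, and
the quadratic form's integrand becomes `s² (a')² r + (r s s' a²)'`. The exact derivative integrates
to zero since `a` vanishes at both ends. The remaining integrand is continuous and nonnegative, and
it vanishes identically only if `a' = 0`, that is, only if `a` is the constant `a b₀ = 0`.
-/

open Real Set

/-- With `0 < b₀ < 1`, `c ∈ ℝ`, `s` twice continuously differentiable,
strictly positive, satisfying `s'' + s'/r − 4s/r² = c s(2s² − 1)` on `[b₀,1]`, and `a`
continuously differentiable with `a b₀ = a 1 = 0`, setting `a₀ = s·a` (so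
`a₀' = s' a + s a'`) one has
`∫_{b₀}^1 [(a₀')² r + 4 a₀²/r + c(2s² − 1) a₀² r] dr = ∫_{b₀}^1 s² (a')² r dr`,
which is strictly positive if `a` is not identically zero. -/
theorem stmt_15 (b₀ c : ℝ) (hb0 : 0 < b₀) (hb1 : b₀ < 1)
    (s s' s'' : ℝ → ℝ)
    (hds : ∀ r ∈ Icc b₀ 1, HasDerivAt s (s' r) r)
    (hds' : ∀ r ∈ Icc b₀ 1, HasDerivAt s' (s'' r) r)
    (hs''c : ContinuousOn s'' (Icc b₀ 1))
    (hspos : ∀ r ∈ Icc b₀ 1, 0 < s r)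
    (hode : ∀ r ∈ Icc b₀ 1,
      s'' r + s' r / r - 4 * s r / r ^ 2 = c * s r * (2 * (s r) ^ 2 - 1))
    (a a' : ℝ → ℝ)
    (hda : ∀ r ∈ Icc b₀ 1, HasDerivAt a (a' r) r)
    (ha'c : ContinuousOn a' (Icc b₀ 1))
    (hab : a b₀ = 0) (ha1 : a 1 = 0) :
    (∫ r in b₀..1, ((s' r * a r + s r * a' r) ^ 2 * r
        + 4 * (s r * a r) ^ 2 / r
        + c * (2 * (s r) ^ 2 - 1) * (s r * a r) ^ 2 * r))
      = ∫ r in b₀..1, (s r) ^ 2 * (a' r) ^ 2 * r ∧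
    ((∃ r ∈ Icc b₀ 1, a r ≠ 0) →
      0 < ∫ r in b₀..1, ((s' r * a r + s r * a' r) ^ 2 * r
        + 4 * (s r * a r) ^ 2 / r
        + c * (2 * (s r) ^ 2 - 1) * (s r * a r) ^ 2 * r)) := by
  have hs : ContinuousOn s (Icc b₀ 1) := fun r hr => (hds r hr).continuousAt.continuousWithinAt
  have hs' : ContinuousOn s' (Icc b₀ 1) := fun r hr => (hds' r hr).continuousAt.continuousWithinAt
  have ha : ContinuousOn a (Icc b₀ 1) := fun r hr => (hda r hr).continuousAt.continuousWithinAt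
  have hu : uIcc b₀ 1 = Icc b₀ 1 := uIcc_of_le hb1.le
  have hgc : ContinuousOn (fun r => (s r) ^ 2 * (a' r) ^ 2 * r) (Icc b₀ 1) := by fun_prop
  have hFc : ContinuousOn (fun r => s r * s' r * a r ^ 2 + r * s' r ^ 2 * a r ^ 2
      + r * s r * s'' r * a r ^ 2 + 2 * r * s r * s' r * a r * a' r) (Icc b₀ 1) := by fun_prop
  have hgi := (hu ▸ hgc).intervalIntegrable (μ := MeasureTheory.volume)
  have hFi := (hu ▸ hFc).intervalIntegrable (μ := MeasureTheory.volume)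
  have hF : ∀ r ∈ uIcc b₀ 1, HasDerivAt (fun r => r * s r * s' r * a r ^ 2)
      (s r * s' r * a r ^ 2 + r * s' r ^ 2 * a r ^ 2
        + r * s r * s'' r * a r ^ 2 + 2 * r * s r * s' r * a r * a' r) r := by
    intro r hr
    rw [hu] at hr
    refine ((((hasDerivAt_id r).mul (hds r hr)).mul (hds' r hr)).mul
      ((hda r hr).pow 2)).congr_deriv ?_
    simp only [Pi.mul_apply, Pi.pow_apply, id]
    push_cast
    ring
  have hF0 := intervalIntegral.integral_eq_sub_of_hasDerivAt hF hFi
  have key : (∫ r in b₀..1, ((s' r * a r + s r * a' r) ^ 2 * r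
        + 4 * (s r * a r) ^ 2 / r
        + c * (2 * (s r) ^ 2 - 1) * (s r * a r) ^ 2 * r))
      = ∫ r in b₀..1, (s r) ^ 2 * (a' r) ^ 2 * r := by
    -- Multiplying the equation by `s a² r` turns the integrand into `s² (a')² r + (r s s' a²)'`.
    have hsplit : ∀ r ∈ uIcc b₀ 1, (s' r * a r + s r * a' r) ^ 2 * r
        + 4 * (s r * a r) ^ 2 / r + c * (2 * (s r) ^ 2 - 1) * (s r * a r) ^ 2 * r
        = (s r) ^ 2 * (a' r) ^ 2 * r
          + (s r * s' r * a r ^ 2 + r * s' r ^ 2 * a r ^ 2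
            + r * s r * s'' r * a r ^ 2 + 2 * r * s r * s' r * a r * a' r) := by
      intro r hr
      rw [hu] at hr
      have hr0 : r ≠ 0 := (hb0.trans_le hr.1).ne'
      have h : c * (2 * (s r) ^ 2 - 1) * (s r * a r) ^ 2 * r
          = (s'' r + s' r / r - 4 * s r / r ^ 2) * (s r * a r ^ 2 * r) := by
        rw [hode r hr]
        ring
      rw [h]
      field_simp
      ring
    rw [intervalIntegral.integral_congr hsplit, intervalIntegral.integral_add hgi hFi, hF0]
    simp [hab, ha1]
  refine ⟨key, ?_⟩
  rintro ⟨x, hx, hax⟩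
  rw [key]
  refine intervalIntegral.integral_pos hb1 hgc (fun r hr => ?_) ?_
  · have := hb0.trans hr.1
    positivity
  · -- Otherwise `a' = 0` throughout, so `a` is constantly `a b₀ = 0`.
    by_contra! hle
    apply hax
    rw [← hab]
    refine constant_of_has_deriv_right_zero ha (fun r hr => ?_) x hx
    have hr' := Ico_subset_Icc_self hr
    have hr0 : 0 < r := hb0.trans_le hr.1
    have hsr := hspos r hr'
    have h0 : a' r = 0 := by
      by_contra hne
      have : 0 < s r ^ 2 * a' r ^ 2 * r := by positivity
      exact absurd this (not_lt.mpr (hle r hr'))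
    exact h0 ▸ (hda r hr').hasDerivWithinAt
end

section
/- Let 0<b₀<1 and c > 0. Suppose s:[b₀,1]→ℝ is twice continuously differentiable, nonnegative, satisfies s''(r) + s'(r)/r − 4 s(r)/r² = c · s(r)(2 s(r)² − 1) on [b₀,1], and s(b₀) = s(1) = 1/√2. Then s(r) ≤ 1/√2 for all r ∈ [b₀,1]. -/
open Real Set

/-!
Maximum principle. If `s` exceeds `1/√2` somewhere, its maximum over `[b₀,1]` is attained at an
interior point `m` with `s m > 1/√2`. There `s' m = 0`, so the equation gives
`s'' m = 4 s m / m² + c s m (2 (s m)² - 1) > 0`. By the second derivative test `m` is then also a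
local minimum, so `s` is constant near `m` and `s'' m = 0`, a contradiction.
-/

/-- With `0 < b₀ < 1` and `c > 0`, if `s` is twice continuously
differentiable, nonnegative, satisfies `s'' + s'/r − 4s/r² = c s(2s² − 1)` on `[b₀,1]`
and `s b₀ = s 1 = 1/√2`, then `s ≤ 1/√2` on `[b₀,1]`. -/
theorem stmt_16 (b₀ c : ℝ) (hb0 : 0 < b₀) (hb1 : b₀ < 1) (hc : 0 < c)
    (s s' s'' : ℝ → ℝ)
    (hds : ∀ r ∈ Icc b₀ 1, HasDerivAt s (s' r) r)
    (hds' : ∀ r ∈ Icc b₀ 1, HasDerivAt s' (s'' r) r)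
    (hs''c : ContinuousOn s'' (Icc b₀ 1))
    (hsnn : ∀ r ∈ Icc b₀ 1, 0 ≤ s r)
    (hode : ∀ r ∈ Icc b₀ 1,
      s'' r + s' r / r - 4 * s r / r ^ 2 = c * s r * (2 * (s r) ^ 2 - 1))
    (hsb : s b₀ = 1 / Real.sqrt 2) (hs1 : s 1 = 1 / Real.sqrt 2) :
    ∀ r ∈ Icc b₀ 1, s r ≤ 1 / Real.sqrt 2 := by
  intro r hr
  by_contra! hlt
  obtain ⟨m, hm, hmax⟩ := isCompact_Icc.exists_isMaxOn ⟨r, hr⟩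
    (fun x hx => (hds x hx).continuousAt.continuousWithinAt)
  have hsm : 1 / Real.sqrt 2 < s m := hlt.trans_le (hmax hr)
  have hmb : m ≠ b₀ := by rintro rfl; linarith
  have hm1 : m ≠ 1 := by rintro rfl; linarith
  have hnhds : Icc b₀ 1 ∈ nhds m :=
    Icc_mem_nhds (lt_of_le_of_ne hm.1 hmb.symm) (lt_of_le_of_ne hm.2 hm1)
  have hlmax : IsLocalMax s m := hmax.isLocalMax hnhds
  have hs'm : s' m = 0 := hlmax.hasDerivAt_eq_zero (hds m hm)
  have hmpos : 0 < m := hb0.trans_le hm.1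
  have hspos : 0 < s m := lt_trans (by positivity) hsm
  have hsq : 1 / 2 < s m ^ 2 := by
    have h : (1 / Real.sqrt 2) ^ 2 < s m ^ 2 := pow_lt_pow_left₀ hsm (by positivity) two_ne_zero
    rwa [div_pow, Real.sq_sqrt (by norm_num), one_pow] at h
  have hs''pos : 0 < s'' m := by
    have h := hode m hm
    rw [hs'm, zero_div, add_zero] at h
    have h1 : 0 < 4 * s m / m ^ 2 := by positivity
    have h2 : 0 < c * s m * (2 * s m ^ 2 - 1) := mul_pos (mul_pos hc hspos) (by linarith)
    linarith
  have hderiv : deriv s =ᶠ[nhds m] s' := by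
    filter_upwards [hnhds] with x hx using (hds x hx).deriv
  have hdd : deriv (deriv s) m = s'' m := hderiv.deriv_eq.trans (hds' m hm).deriv
  have hlmin : IsLocalMin s m := isLocalMin_of_deriv_deriv_pos (by rwa [hdd])
    ((hds m hm).deriv.trans hs'm) (hds m hm).continuousAt
  have hconst : s =ᶠ[nhds m] fun _ => s m := by
    filter_upwards [hlmax, hlmin] with x h1 h2 using le_antisymm h1 h2
  have hzero : deriv (deriv s) m = 0 := by
    rw [hconst.deriv.deriv_eq]
    simp
  linarith
end

section
/- Let 0<b₀<1 and c > 0. Suppose s, u : [b₀,1]→ℝ are twice continuously differentiable, nonnegative, and both satisfy the equation v''(r) + v'(r)/r − 4 v(r)/r² = c · v(r)(2 v(r)² − 1) on [b₀,1]. Assume s(b₀) = s(1) = 1/√2, u(b₀) = 0, u(1) = 1/√2, and u is strictly increasing on [b₀,1]. Then u(r) ≤ s(r) for all r ∈ [b₀,1]. -/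
open Real Set

/-!
Suppose `s r₀ < u r₀`, and let `(α, β)` be the maximal interval around `r₀` on which `s < u`.
The weighted Wronskian `W r = r (u' s - s' u)` satisfies `W' = 2 c r s u (u² - s²) ≥ 0` there,
because the linear parts of the two equations cancel. At `α` the functions agree and `u - s` is
positive just to its right, so `W α ≥ 0`, and hence `W ≥ 0` on `[α, β]`. Since
`(s / u)' = - W / (r u²)`, the quotient `s / u` is nonincreasing on `[α, β]`; but it is `< 1` at
`r₀` and `≥ 1` at `β`, a contradiction. Working with `s / u` rather than `u / s` avoids needing
`s > 0`: positivity of `u` on `(b₀, 1]` follows from its strict monotonicity.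
-/

/-- A function that is nonpositive at `a` and positive just to the right of `a` vanishes at `a`
and has nonnegative derivative there. -/
lemma eq_zero_and_deriv_nonneg_of_pos_right {g : ℝ → ℝ} {a b d : ℝ} (hab : a < b)
    (hg : HasDerivAt g d a) (ha : g a ≤ 0) (hpos : ∀ x ∈ Ioc a b, 0 < g x) :
    g a = 0 ∧ 0 ≤ d := by
  have hev : ∀ᶠ x in nhdsWithin a (Ioi a), x ∈ Ioc a b := Ioc_mem_nhdsGT hab
  have h0 : g a = 0 := by
    refine le_antisymm ha ?_
    refine ge_of_tendsto (hg.continuousAt.tendsto.mono_left (nhdsWithin_le_nhds (s := Ioi a))) ?_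
    filter_upwards [hev] with x hx using (hpos x hx).le
  refine ⟨h0, ?_⟩
  have ht := (hasDerivWithinAt_iff_tendsto_slope' (s := Ioi a) (by simp)).1 hg.hasDerivWithinAt
  refine ge_of_tendsto ht ?_
  filter_upwards [hev] with x hx
  rw [slope_def_field, h0, sub_zero]
  exact div_nonneg (hpos x hx).le (sub_pos.2 hx.1).le

/-- With `0 < b₀ < 1` and `c > 0`, suppose `s, u` are twice continuously
differentiable, nonnegative, both satisfy `v'' + v'/r − 4v/r² = c v(2v² − 1)` on
`[b₀,1]`, with `s b₀ = s 1 = 1/√2`, `u b₀ = 0`, `u 1 = 1/√2`, and `u` strictly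
increasing on `[b₀,1]`. Then `u ≤ s` on `[b₀,1]`. -/
theorem stmt_17 (b₀ c : ℝ) (hb0 : 0 < b₀) (hb1 : b₀ < 1) (hc : 0 < c)
    (s s' s'' u u' u'' : ℝ → ℝ)
    (hds : ∀ r ∈ Icc b₀ 1, HasDerivAt s (s' r) r)
    (hds' : ∀ r ∈ Icc b₀ 1, HasDerivAt s' (s'' r) r)
    (hs''c : ContinuousOn s'' (Icc b₀ 1))
    (hdu : ∀ r ∈ Icc b₀ 1, HasDerivAt u (u' r) r)
    (hdu' : ∀ r ∈ Icc b₀ 1, HasDerivAt u' (u'' r) r)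
    (hu''c : ContinuousOn u'' (Icc b₀ 1))
    (hsnn : ∀ r ∈ Icc b₀ 1, 0 ≤ s r)
    (hunn : ∀ r ∈ Icc b₀ 1, 0 ≤ u r)
    (hodes : ∀ r ∈ Icc b₀ 1,
      s'' r + s' r / r - 4 * s r / r ^ 2 = c * s r * (2 * (s r) ^ 2 - 1))
    (hodeu : ∀ r ∈ Icc b₀ 1,
      u'' r + u' r / r - 4 * u r / r ^ 2 = c * u r * (2 * (u r) ^ 2 - 1))
    (hsb : s b₀ = 1 / Real.sqrt 2) (hs1 : s 1 = 1 / Real.sqrt 2)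
    (hub : u b₀ = 0) (hu1 : u 1 = 1 / Real.sqrt 2)
    (humono : StrictMonoOn u (Icc b₀ 1)) :
    ∀ r ∈ Icc b₀ 1, u r ≤ s r := by
  intro r₀ hr₀
  by_contra! hlt
  have hcs : ContinuousOn s (Icc b₀ 1) := fun r hr => (hds r hr).continuousAt.continuousWithinAt
  have hcu : ContinuousOn u (Icc b₀ 1) := fun r hr => (hdu r hr).continuousAt.continuousWithinAt
  have hq : 0 < 1 / Real.sqrt 2 := by positivity
  have hcomp : ∀ a b, b₀ ≤ a → b ≤ 1 → IsCompact (Icc a b ∩ {r | u r ≤ s r}) := by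
    intro a b ha hb
    have hsub : Icc a b ⊆ Icc b₀ 1 := Icc_subset_Icc ha hb
    exact isCompact_Icc.of_isClosed_subset
      (isClosed_Icc.isClosed_le (hcu.mono hsub) (hcs.mono hsub)) (fun x hx => hx.1)
  -- `α` is the last point before `r₀`, and `β` the first one after it, at which `u ≤ s`.
  obtain ⟨α, ⟨⟨hα1, hα2⟩, hαs⟩, hαmax⟩ := (hcomp b₀ r₀ le_rfl hr₀.2).exists_isGreatest
    ⟨b₀, ⟨le_rfl, hr₀.1⟩, by simp only [mem_ofPred_eq]; rw [hub, hsb]; exact hq.le⟩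
  obtain ⟨β, ⟨⟨hβ1, hβ2⟩, hβs⟩, hβmin⟩ := (hcomp r₀ 1 hr₀.1 le_rfl).exists_isLeast
    ⟨1, ⟨hr₀.2, le_rfl⟩, by simp only [mem_ofPred_eq]; rw [hu1, hs1]⟩
  simp only [mem_ofPred_eq] at hαs hβs
  have hαr : α < r₀ := lt_of_le_of_ne hα2 (by rintro rfl; linarith)
  have hgt : ∀ r, α < r → r < β → s r < u r := by
    intro r h1 h2
    by_contra! h
    rcases le_total r r₀ with h3 | h3
    · exact absurd (hαmax ⟨⟨by linarith, h3⟩, h⟩) (not_le.2 h1)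
    · exact absurd (hβmin ⟨⟨h3, by linarith⟩, h⟩) (not_le.2 h2)
  have hrβ : r₀ < β := lt_of_le_of_ne hβ1 (by rintro rfl; linarith)
  have hsub : Icc α β ⊆ Icc b₀ 1 := Icc_subset_Icc hα1 hβ2
  have hαm : α ∈ Icc b₀ 1 := hsub ⟨le_rfl, by linarith⟩
  obtain ⟨hg0, hg1⟩ := eq_zero_and_deriv_nonneg_of_pos_right (g := fun r => u r - s r) hαr
    ((hdu α hαm).sub (hds α hαm)) (by simpa using hαs)
    (fun x hx => sub_pos.2 (hgt x hx.1 (hx.2.trans_lt hrβ)))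
  have hαeq : u α = s α := sub_eq_zero.1 hg0
  have hαb : b₀ < α := by
    refine lt_of_le_of_ne hα1 ?_
    rintro rfl
    rw [hub, hsb] at hαeq
    exact hq.ne hαeq
  have hupos : ∀ r ∈ Icc α β, 0 < u r := by
    intro r hr
    have := humono ⟨le_rfl, hb1.le⟩ (hsub hr) (hαb.trans_le hr.1)
    rwa [hub] at this
  have hW : ∀ r ∈ Icc α β, HasDerivAt (fun r => r * (u' r * s r - s' r * u r))
      (2 * c * r * s r * u r * (u r ^ 2 - s r ^ 2)) r := by
    intro r hr
    have hm := hsub hr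
    have hr0 : r ≠ 0 := (hb0.trans_le hm.1).ne'
    have h := (hasDerivAt_id r).mul
      (((hdu' r hm).mul (hds r hm)).sub ((hds' r hm).mul (hdu r hm)))
    refine h.congr_deriv ?_
    have e1 : u'' r = c * u r * (2 * u r ^ 2 - 1) - u' r / r + 4 * u r / r ^ 2 := by
      linarith [hodeu r hm]
    have e2 : s'' r = c * s r * (2 * s r ^ 2 - 1) - s' r / r + 4 * s r / r ^ 2 := by
      linarith [hodes r hm]
    simp only [id, Pi.mul_apply, Pi.sub_apply]
    rw [e1, e2]
    field_simp
    ring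
  have hWmono : MonotoneOn (fun r => r * (u' r * s r - s' r * u r)) (Icc α β) := by
    refine monotoneOn_of_hasDerivWithinAt_nonneg (convex_Icc α β)
      (fun r hr => (hW r hr).continuousAt.continuousWithinAt)
      (fun r hr => (hW r (interior_subset hr)).hasDerivWithinAt) ?_
    intro r hr
    have hm := hsub (interior_subset hr)
    rw [interior_Icc] at hr
    have h1 : 0 < r := hb0.trans_le hm.1
    have h2 := hsnn r hm
    have h3 := hunn r hm
    have h4 : 0 ≤ u r ^ 2 - s r ^ 2 := by nlinarith [hgt r hr.1 hr.2]
    positivity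
  have hWnn : ∀ r ∈ Icc α β, 0 ≤ u' r * s r - s' r * u r := by
    intro r hr
    have h := hWmono ⟨le_rfl, by linarith⟩ hr hr.1
    have h0 : 0 ≤ α * (u' α * s α - s' α * u α) := by
      rw [hαeq, ← sub_mul]
      exact mul_nonneg (by linarith) (mul_nonneg hg1 (hsnn α hαm))
    exact nonneg_of_mul_nonneg_right (h0.trans h) (by linarith [hr.1])
  have hquot : ∀ r ∈ Icc α β, HasDerivAt (fun r => s r / u r)
      ((s' r * u r - s r * u' r) / u r ^ 2) r := fun r hr =>
    (hds r (hsub hr)).div (hdu r (hsub hr)) (hupos r hr).ne'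
  have hanti : AntitoneOn (fun r => s r / u r) (Icc α β) := by
    refine antitoneOn_of_hasDerivWithinAt_nonpos (convex_Icc α β)
      (fun r hr => (hquot r hr).continuousAt.continuousWithinAt)
      (fun r hr => (hquot r (interior_subset hr)).hasDerivWithinAt) ?_
    intro r hr
    exact div_nonpos_of_nonpos_of_nonneg
      (by linarith [hWnn r (interior_subset hr)]) (sq_nonneg _)
  have hβm : β ∈ Icc α β := ⟨by linarith, le_rfl⟩
  have hrm : r₀ ∈ Icc α β := ⟨hα2, hβ1⟩
  have h1 : s β / u β ≤ s r₀ / u r₀ := hanti hrm hβm hβ1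
  have h2 : 1 ≤ s β / u β := (one_le_div (hupos β hβm)).2 hβs
  have h3 : s r₀ / u r₀ < 1 := (div_lt_one (hupos r₀ hrm)).2 hlt
  linarith
end

section
/- Let 0<b₀<1 and c > 0. Suppose s:[b₀,1]→ℝ is twice continuously differentiable, strictly positive, satisfies s''(r) + s'(r)/r − 4 s(r)/r² = c · s(r)(2 s(r)² − 1) on [b₀,1], and s(b₀) = s(1) = 1/√2. Then s(r)² ≥ 1/2 − 2/(c b₀²) for all r ∈ [b₀,1]. In particular, min_{[b₀,1]} s → 1/√2 as c → ∞. -/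
open Real Set

/-!
The bound is a maximum-principle argument. At an interior minimum point `x` of `s` one has
`s'(x) = 0` and `s''(x) ≥ 0` (`second_deriv_nonneg_of_isLocalMin`), so the equation divided by
`s(x) > 0` reads `0 ≤ 4 / x² + c (2 s(x)² - 1)`, i.e. `s(x)² ≥ 1/2 - 2 / (c x²)`; a minimum on the
boundary has `s² = 1/2`. This gives the uniform lower bound (`sq_lower_bound`).

For the limit, write `a = 1/√2` and let `m ≤ a` be the minimum. Then
`(a - m)² ≤ a² - m² ≤ 2 / (c b₀²)`, which tends to zero as `c → ∞`.
-/

/-- Second-order necessary condition at a local minimum: if `f''(x) < 0`, the second derivative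
test makes `x` a local maximum as well, so `f` is locally constant and `f''(x) = 0`. -/
lemma second_deriv_nonneg_of_isLocalMin {f f' : ℝ → ℝ} {x d : ℝ}
    (hf : ∀ᶠ y in nhds x, HasDerivAt f (f' y) y) (hf' : HasDerivAt f' d x)
    (hmin : IsLocalMin f x) : 0 ≤ d := by
  by_contra! hd
  have hderiv : deriv f =ᶠ[nhds x] f' := hf.mono fun y hy => hy.deriv
  have hdd : deriv (deriv f) x = d := by rw [hderiv.deriv_eq, hf'.deriv]
  have hmax : IsLocalMax f x :=
    isLocalMax_of_deriv_deriv_neg (by rwa [hdd]) hmin.deriv_eq_zero hf.self_of_nhds.continuousAt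
  have hconst : f =ᶠ[nhds x] fun _ => f x := by
    filter_upwards [hmin, hmax] with y h1 h2 using le_antisymm h2 h1
  have hzero : deriv (deriv f) x = 0 := by
    rw [hconst.deriv.deriv_eq]
    simp
  linarith

lemma one_div_sqrt_two_sq : (1 / Real.sqrt 2) ^ 2 = 1 / 2 := by
  rw [div_pow, Real.sq_sqrt (by norm_num)]
  norm_num

lemma sq_lower_bound {b₀ c : ℝ} (hb0 : 0 < b₀) (hb1 : b₀ < 1) (hc : 0 < c) {s s' s'' : ℝ → ℝ}
    (hs : ∀ r ∈ Icc b₀ 1, HasDerivAt s (s' r) r)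
    (hs' : ∀ r ∈ Icc b₀ 1, HasDerivAt s' (s'' r) r)
    (hpos : ∀ r ∈ Icc b₀ 1, 0 < s r)
    (hode : ∀ r ∈ Icc b₀ 1,
      s'' r + s' r / r - 4 * s r / r ^ 2 = c * s r * (2 * (s r) ^ 2 - 1))
    (h0 : s b₀ = 1 / Real.sqrt 2) (h1 : s 1 = 1 / Real.sqrt 2) :
    ∀ r ∈ Icc b₀ 1, 1 / 2 - 2 / (c * b₀ ^ 2) ≤ (s r) ^ 2 := by
  have hcont : ContinuousOn s (Icc b₀ 1) := fun r hr => (hs r hr).continuousAt.continuousWithinAt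
  obtain ⟨x, hx, hmin⟩ := isCompact_Icc.exists_isMinOn (nonempty_Icc.2 hb1.le) hcont
  intro r hr
  have hsx : 0 < s x := hpos x hx
  have hle : s x ^ 2 ≤ s r ^ 2 := pow_le_pow_left₀ hsx.le (hmin hr) 2
  refine le_trans ?_ hle
  have hq : 0 ≤ 2 / (c * b₀ ^ 2) := by positivity
  rcases hx.1.eq_or_lt with rfl | hbx
  · rw [h0, one_div_sqrt_two_sq]
    linarith
  rcases hx.2.eq_or_lt with rfl | hx1
  · rw [h1, one_div_sqrt_two_sq]
    linarith
  have hnhds : Icc b₀ 1 ∈ nhds x := Icc_mem_nhds hbx hx1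
  have hloc : IsLocalMin s x := hmin.isLocalMin hnhds
  have hd1 : s' x = 0 := hloc.hasDerivAt_eq_zero (hs x hx)
  have hd2 : 0 ≤ s'' x :=
    second_deriv_nonneg_of_isLocalMin (Filter.mem_of_superset hnhds hs) (hs' x hx) hloc
  have hx0 : 0 < x := hb0.trans hbx
  have heq := hode x hx
  rw [hd1, zero_div, add_zero] at heq
  have hfac : s'' x = s x * (4 / x ^ 2 + c * (2 * s x ^ 2 - 1)) := by
    linear_combination heq
  have hnonneg : 0 ≤ 4 / x ^ 2 + c * (2 * s x ^ 2 - 1) := by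
    rw [hfac] at hd2
    exact nonneg_of_mul_nonneg_right hd2 hsx
  have hmono : 4 / x ^ 2 ≤ 4 / b₀ ^ 2 := by gcongr
  have hsplit : 4 / b₀ ^ 2 = c * (2 * (2 / (c * b₀ ^ 2))) := by
    field_simp
    norm_num
  have hprod : 0 ≤ c * (2 * (2 / (c * b₀ ^ 2)) + (2 * s x ^ 2 - 1)) := by
    rw [mul_add, ← hsplit]
    linarith
  have := nonneg_of_mul_nonneg_right hprod hc
  linarith

/-- For `0 < b₀ < 1`: (a) for every `c > 0` and every twice continuously
differentiable, strictly positive `s` satisfying `s'' + s'/r − 4s/r² = c s(2s² − 1)` on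
`[b₀,1]` with `s b₀ = s 1 = 1/√2`, one has `s² ≥ 1/2 − 2/(c b₀²)` on `[b₀,1]`;
(b) in particular, `min_{[b₀,1]} s → 1/√2` as `c → ∞`, uniformly over such `s`. -/
theorem stmt_18 (b₀ : ℝ) (hb0 : 0 < b₀) (hb1 : b₀ < 1) :
    (∀ c : ℝ, 0 < c → ∀ s s' s'' : ℝ → ℝ,
      (∀ r ∈ Icc b₀ 1, HasDerivAt s (s' r) r) →
      (∀ r ∈ Icc b₀ 1, HasDerivAt s' (s'' r) r) →
      ContinuousOn s'' (Icc b₀ 1) →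
      (∀ r ∈ Icc b₀ 1, 0 < s r) →
      (∀ r ∈ Icc b₀ 1,
        s'' r + s' r / r - 4 * s r / r ^ 2 = c * s r * (2 * (s r) ^ 2 - 1)) →
      s b₀ = 1 / Real.sqrt 2 → s 1 = 1 / Real.sqrt 2 →
      ∀ r ∈ Icc b₀ 1, 1 / 2 - 2 / (c * b₀ ^ 2) ≤ (s r) ^ 2) ∧
    (∀ ε : ℝ, 0 < ε → ∃ C : ℝ, ∀ c : ℝ, C ≤ c → ∀ s s' s'' : ℝ → ℝ,
      (∀ r ∈ Icc b₀ 1, HasDerivAt s (s' r) r) →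
      (∀ r ∈ Icc b₀ 1, HasDerivAt s' (s'' r) r) →
      ContinuousOn s'' (Icc b₀ 1) →
      (∀ r ∈ Icc b₀ 1, 0 < s r) →
      (∀ r ∈ Icc b₀ 1,
        s'' r + s' r / r - 4 * s r / r ^ 2 = c * s r * (2 * (s r) ^ 2 - 1)) →
      s b₀ = 1 / Real.sqrt 2 → s 1 = 1 / Real.sqrt 2 →
      |sInf (s '' Icc b₀ 1) - 1 / Real.sqrt 2| < ε) := by
  refine ⟨fun c hc s s' s'' hs hs' _ hpos hode h0 h1 =>
    sq_lower_bound hb0 hb1 hc hs hs' hpos hode h0 h1, fun ε hε => ?_⟩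
  -- This threshold makes `2 / (c b₀²) ≤ ε² / 2` for all `c` above it.
  refine ⟨4 / (ε ^ 2 * b₀ ^ 2), fun c hC s s' s'' hs hs' _ hpos hode h0 h1 => ?_⟩
  have hc : 0 < c := lt_of_lt_of_le (by positivity) hC
  have hcont : ContinuousOn s (Icc b₀ 1) := fun r hr => (hs r hr).continuousAt.continuousWithinAt
  obtain ⟨x, hx, hinf, hmin⟩ :=
    isCompact_Icc.exists_sInf_image_eq_and_le (nonempty_Icc.2 hb1.le) hcont
  rw [hinf]
  have hlow := sq_lower_bound hb0 hb1 hc hs hs' hpos hode h0 h1 x hx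
  have hm : 0 < s x := hpos x hx
  have hma : s x ≤ 1 / Real.sqrt 2 := h0 ▸ hmin b₀ (left_mem_Icc.2 hb1.le)
  have hsmall : 2 / (c * b₀ ^ 2) ≤ ε ^ 2 / 2 := by
    rw [div_le_iff₀ (by positivity)] at hC ⊢
    linarith
  have ha := one_div_sqrt_two_sq
  rw [abs_sub_comm, abs_of_nonneg (sub_nonneg.2 hma)]
  refine lt_of_pow_lt_pow_left₀ 2 hε.le ?_
  have hε2 : 0 < ε ^ 2 := by positivity
  -- `(a - m)² ≤ a² - m²` because `0 < m ≤ a`.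
  nlinarith [mul_nonneg hm.le (sub_nonneg.2 hma)]
end
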